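/- Let a > 0 and b ≥ 0 be constants and let f : ℝ → ℝ be continuous with f(s) > 0 for s > 0, f(0) = 0, lim_{s→0⁺} f(s)/s = +∞ and lim_{s→+∞} f(s)/s = 0. Assume in addition that f is monotone increasing and that there exists α ∈ (0,1) such that f(τ·s) ≥ τ^α·f(s) for all τ ∈ (0,1) and all s > 0. Then for each λ > 0 the problem u''''(x) − (a + b∫₀¹(u'(t))²dt)·u''(x) = λ·f(u(x)) on (0,1) with u(0) = u(1) = u''(0) = u''(1) = 0 has exactly one positive solution. -/

import Mathlib

/-!
With `w = -u''` the beam equation splits into two second-order Dirichlet problems,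
`-u'' = w` and `-w'' + m w = λ f(u)`, coupled to the scalar equation
`m = a + b ∫ (u')² = a + b ∫ u w`.

*The coefficient `m` frozen.* The maximum principle (`max_principle`) makes the solution of each
linear problem increasing in its right-hand side and decreasing in `m`. If `u`, `v` solve the
problems with coefficients `m ≥ m'` and `t u ≤ v` for some `t ∈ (0,1)`, then `α`-concavity and
monotonicity of `f` give `t ^ α u ≤ v`; iterating, `t ^ (α ^ n) u ≤ v`, and in the limit `u ≤ v`.
Some admissible `t` exists because positive solutions are comparable with `x (1 - x)`. Hence
(`BeamSol.le`) positive solutions, and their moments `w`, are decreasing in `m`, and they are unique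
for each `m`. They exist (`exists_beamSol`) by monotone iteration downwards from a large constant,
with `ε sin (π x)` as a barrier from below.

*The coefficient.* By `BeamSol.integral_le`, `g(m) = a + b ∫ u_m w_m` is a decreasing function of
`m`, so it has at most one fixed point: this is uniqueness. It is continuous along monotone
sequences of coefficients (`tendsto_integral`), by monotone convergence and uniqueness of `u_m`, so
the supremum of `{m ≥ a | m ≤ g m}` is a fixed point: this is existence. Limits are taken in the
integral form of the equations; writing `-w'' + m w = h` as `-w'' = h - m w`, only the Green
function of `-d²/dx²` is needed.
-/

open Set MeasureTheory intervalIntegral Real Filter Topology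

/-- The `n`-th derivative of `u` on the interval `[0,1]` (one-sided at the endpoints). -/
noncomputable def D (n : ℕ) (u : ℝ → ℝ) : ℝ → ℝ :=
  iteratedDerivWithin n u (Set.Icc 0 1)

/-- The supremum norm `‖u‖∞ = sup_{x ∈ [0,1]} |u x|`. -/
noncomputable def normInf (u : ℝ → ℝ) : ℝ :=
  ⨆ x : Set.Icc (0:ℝ) 1, |u x|

/-- The hinged boundary conditions `u(0) = u(1) = u''(0) = u''(1) = 0`. -/
def BC (u : ℝ → ℝ) : Prop :=
  u 0 = 0 ∧ u 1 = 0 ∧ D 2 u 0 = 0 ∧ D 2 u 1 = 0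

/-- The Kirchhoff nonlocal coefficient `a + b ∫₀¹ (u'(t))² dt`. -/
noncomputable def KCoef (a b : ℝ) (u : ℝ → ℝ) : ℝ :=
  a + b * ∫ t in (0:ℝ)..1, (D 1 u t) ^ 2

/-! ### The linear Dirichlet problem and the maximum principle -/

/-- `w` is a solution, continuous on `[0,1]`, of the Dirichlet problem `-w'' + m w = h` on `(0,1)`,
`w(0) = w(1) = 0`. The derivative is carried as a function `w'`, two-sided at interior points, and
nothing is required of it at the endpoints. -/
structure IsSol (m : ℝ) (h w : ℝ → ℝ) : Prop where
  cont : ContinuousOn w (Icc 0 1)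
  left : w 0 = 0
  right : w 1 = 0
  ode : ∃ w' : ℝ → ℝ, (∀ x ∈ Ioo (0:ℝ) 1, HasDerivAt w (w' x) x) ∧
    ∀ x ∈ Ioo (0:ℝ) 1, HasDerivAt w' (m * w x - h x) x

/-- The weak maximum principle for `-z'' + m z ≥ 0`. For `m = 0` it is concavity. For `m > 0`, at a
negative interior minimum `z'' < 0`, so that point is also a local maximum, `z` is constant near it,
and `z'' = 0`. -/
theorem max_principle {m : ℝ} (hm : 0 ≤ m) {z z' z'' : ℝ → ℝ}
    (hc : ContinuousOn z (Icc 0 1)) (h0 : 0 ≤ z 0) (h1 : 0 ≤ z 1)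
    (hz : ∀ x ∈ Ioo (0:ℝ) 1, HasDerivAt z (z' x) x)
    (hz' : ∀ x ∈ Ioo (0:ℝ) 1, HasDerivAt z' (z'' x) x)
    (hle : ∀ x ∈ Ioo (0:ℝ) 1, z'' x ≤ m * z x) :
    ∀ x ∈ Icc (0:ℝ) 1, 0 ≤ z x := by
  have hd2 : ∀ x ∈ Ioo (0:ℝ) 1, deriv (deriv z) x = z'' x := by
    intro x hx
    have : deriv z =ᶠ[𝓝 x] z' := by
      filter_upwards [isOpen_Ioo.mem_nhds hx] with y hy using (hz y hy).deriv
    rw [this.deriv_eq, (hz' x hx).deriv]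
  rcases hm.eq_or_lt with rfl | hm
  · have hconc : ConcaveOn ℝ (Icc (0:ℝ) 1) z := by
      apply concaveOn_of_hasDerivWithinAt2_nonpos (convex_Icc 0 1) hc (f' := z') (f'' := z'')
      · intro x hx; rw [interior_Icc] at hx ⊢; exact (hz x hx).hasDerivWithinAt
      · intro x hx; rw [interior_Icc] at hx ⊢; exact (hz' x hx).hasDerivWithinAt
      · intro x hx; rw [interior_Icc] at hx; simpa using hle x hx
    intro x hx
    have := hconc.2 (left_mem_Icc.2 zero_le_one) (right_mem_Icc.2 zero_le_one)
      (sub_nonneg.2 hx.2) hx.1 (by ring)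
    simp only [smul_eq_mul, mul_zero, mul_one, zero_add] at this
    have h3 := mul_nonneg (sub_nonneg.2 hx.2) h0
    have h4 := mul_nonneg hx.1 h1
    linarith
  · obtain ⟨x₀, hx₀, hmin⟩ := isCompact_Icc.exists_isMinOn
      (nonempty_Icc.2 (zero_le_one (α := ℝ))) hc
    suffices 0 ≤ z x₀ from fun x hx => this.trans (hmin hx)
    by_contra! hneg
    have hx : x₀ ∈ Ioo (0:ℝ) 1 := by
      refine ⟨lt_of_le_of_ne hx₀.1 ?_, lt_of_le_of_ne hx₀.2 ?_⟩ <;> rintro rfl <;> linarith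
    have hlmin : IsLocalMin z x₀ := hmin.isLocalMin (Icc_mem_nhds hx.1 hx.2)
    have h2 : deriv (deriv z) x₀ < 0 := by
      rw [hd2 x₀ hx]
      exact (hle x₀ hx).trans_lt (mul_neg_of_pos_of_neg hm hneg)
    have hlmax : IsLocalMax z x₀ :=
      isLocalMax_of_deriv_deriv_neg h2 hlmin.deriv_eq_zero (hz x₀ hx).continuousAt
    have hconst : z =ᶠ[𝓝 x₀] fun _ => z x₀ := by
      filter_upwards [hlmin, hlmax] with y h3 h4 using le_antisymm h4 h3
    have : deriv (deriv z) x₀ = 0 := by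
      rw [hconst.deriv.deriv_eq]; simp
    linarith

theorem IsSol.nonneg {m : ℝ} (hm : 0 ≤ m) {h w : ℝ → ℝ} (H : IsSol m h w)
    (hh : ∀ x ∈ Ioo (0:ℝ) 1, 0 ≤ h x) : ∀ x ∈ Icc (0:ℝ) 1, 0 ≤ w x := by
  obtain ⟨w', h1, h2⟩ := H.ode
  exact max_principle hm H.cont H.left.ge H.right.ge h1 h2 fun x hx => by linarith [hh x hx]

theorem IsSol.le_const {m c : ℝ} (hm : 0 ≤ m) (hc : 0 ≤ c) {h w : ℝ → ℝ} (H : IsSol m h w)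
    (hh : ∀ x ∈ Ioo (0:ℝ) 1, h x ≤ m * c) : ∀ x ∈ Icc (0:ℝ) 1, w x ≤ c := by
  obtain ⟨w', h1, h2⟩ := H.ode
  have := max_principle (z := fun x => c - w x) hm (continuousOn_const.sub H.cont)
    (by simpa [H.left] using hc) (by simpa [H.right] using hc)
    (fun x hx => (h1 x hx).const_sub c) (fun x hx => (h2 x hx).neg)
    (fun x hx => by linarith [hh x hx])
  exact fun x hx => by linarith [this x hx]

/-- For nonnegative right-hand sides, the solution of `-w'' + m w = h` increases with `h` and
decreases with `m`. -/
theorem IsSol.mono {m m' : ℝ} (hm' : 0 ≤ m') (hmm : m' ≤ m) {h h' w w' : ℝ → ℝ}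
    (H : IsSol m h w) (H' : IsSol m' h' w')
    (hh : ∀ x ∈ Ioo (0:ℝ) 1, 0 ≤ h x) (hhh : ∀ x ∈ Ioo (0:ℝ) 1, h x ≤ h' x) :
    ∀ x ∈ Icc (0:ℝ) 1, w x ≤ w' x := by
  obtain ⟨p, h1, h2⟩ := H.ode
  obtain ⟨q, h3, h4⟩ := H'.ode
  have hw := H.nonneg (hm'.trans hmm) hh
  have := max_principle (z := fun x => w' x - w x) hm' (H'.cont.sub H.cont)
    (by simp [H.left, H'.left]) (by simp [H.right, H'.right])
    (fun x hx => (h3 x hx).sub (h1 x hx)) (fun x hx => (h4 x hx).sub (h2 x hx))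
    (fun x hx => by
      have := mul_nonneg (sub_nonneg.2 hmm) (hw x (Ioo_subset_Icc_self hx))
      linarith [hhh x hx])
  exact fun x hx => by linarith [this x hx]

theorem IsSol.unique {m : ℝ} (hm : 0 ≤ m) {h w v : ℝ → ℝ}
    (H : IsSol m h w) (H' : IsSol m h v) : EqOn w v (Icc 0 1) := by
  obtain ⟨p, h1, h2⟩ := H.ode
  obtain ⟨q, h3, h4⟩ := H'.ode
  intro x hx
  apply le_antisymm
  · have := max_principle (z := fun x => v x - w x) hm (H'.cont.sub H.cont)
      (by simp [H.left, H'.left]) (by simp [H.right, H'.right])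
      (fun x hx => (h3 x hx).sub (h1 x hx)) (fun x hx => (h4 x hx).sub (h2 x hx))
      (fun x hx => by linarith) x hx
    linarith
  · have := max_principle (z := fun x => w x - v x) hm (H.cont.sub H'.cont)
      (by simp [H.left, H'.left]) (by simp [H.right, H'.right])
      (fun x hx => (h1 x hx).sub (h3 x hx)) (fun x hx => (h2 x hx).sub (h4 x hx))
      (fun x hx => by linarith) x hx
    linarith

/-- Changes a Dirichlet problem away from where it is tested. The coefficient may change too, as
long as `m w - h` stays the same: in particular `-w'' + m w = h` becomes `-w'' = h - m w`. -/
theorem IsSol.congr {m m' : ℝ} {h h' w w' : ℝ → ℝ} (H : IsSol m h w)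
    (hw : EqOn w' w (Icc 0 1))
    (hh : ∀ x ∈ Ioo (0:ℝ) 1, m' * w x - h' x = m * w x - h x) : IsSol m' h' w' := by
  obtain ⟨p, h1, h2⟩ := H.ode
  refine ⟨H.cont.congr hw, ?_, ?_, p, ?_, ?_⟩
  · rw [hw (by simp), H.left]
  · rw [hw (by simp), H.right]
  · intro x hx
    refine (h1 x hx).congr_of_eventuallyEq ?_
    filter_upwards [Icc_mem_nhds hx.1 hx.2] with y hy using hw hy
  · intro x hx
    rw [hw (Ioo_subset_Icc_self hx), hh x hx]; exact h2 x hx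

theorem IsSol.smul {m : ℝ} {h w : ℝ → ℝ} (H : IsSol m h w) (c : ℝ) :
    IsSol m (fun x => c * h x) (fun x => c * w x) := by
  obtain ⟨p, h1, h2⟩ := H.ode
  refine ⟨continuousOn_const.mul H.cont, by simp [H.left], by simp [H.right],
    fun x => c * p x, fun x hx => (h1 x hx).const_mul c, fun x hx => ?_⟩
  refine HasDerivAt.congr_deriv ((h2 x hx).const_mul c) ?_; ring

theorem isSol_sin (m : ℝ) :
    IsSol m (fun x => (π ^ 2 + m) * sin (π * x)) (fun x => sin (π * x)) := by
  have hl : ∀ x : ℝ, HasDerivAt (fun x => π * x) π x := fun x => by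
    simpa using (hasDerivAt_id x).const_mul π
  refine ⟨by fun_prop, by simp, by simp, fun x => π * cos (π * x), fun x _ => ?_, fun x _ => ?_⟩
  · refine HasDerivAt.congr_deriv ((hl x).sin) ?_; ring
  · refine HasDerivAt.congr_deriv ((hl x).cos.const_mul π) ?_; ring

/-! ### Solving the linear problem -/

/-- The solutions of `y'' = m y` with initial data `(0, 1)` and `(1, 0)`: `sinh (√m x) / √m` and
`cosh (√m x)`, or `x` and `1` when `m = 0`. -/
theorem exists_fundamental {m : ℝ} (hm : 0 ≤ m) : ∃ S C : ℝ → ℝ,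
    (∀ x, HasDerivAt S (C x) x) ∧ (∀ x, HasDerivAt C (m * S x) x) ∧
    (∀ x, C x ^ 2 - m * S x ^ 2 = 1) ∧ S 0 = 0 ∧ S 1 ≠ 0 := by
  rcases hm.eq_or_lt with rfl | hm
  · exact ⟨id, fun _ => 1, fun x => hasDerivAt_id x,
      fun x => by simpa using hasDerivAt_const x (1:ℝ), by simp, rfl, by simp⟩
  · have hk : 0 < √m := Real.sqrt_pos.2 hm
    have hl : ∀ x : ℝ, HasDerivAt (fun x => √m * x) (√m) x := fun x => by
      simpa using (hasDerivAt_id x).const_mul (√m)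
    refine ⟨fun x => sinh (√m * x) / √m, fun x => cosh (√m * x), fun x => ?_, fun x => ?_,
      fun x => ?_, by simp, ?_⟩
    · refine HasDerivAt.congr_deriv (((hl x).sinh).div_const (√m)) ?_; field_simp
    · refine HasDerivAt.congr_deriv ((hl x).cosh) ?_
      field_simp; rw [Real.sq_sqrt hm.le, mul_comm]
    · have := Real.cosh_sq (√m * x)
      rw [div_pow, Real.sq_sqrt hm.le, this]; field_simp; ring
    · simp [hk.ne.symm]

/-- Variation of parameters: for a right-hand side continuous on the line, the Dirichlet problem has
a solution that satisfies the equation on the whole line. -/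
theorem exists_global {m : ℝ} (hm : 0 ≤ m) {h : ℝ → ℝ} (hh : Continuous h) :
    ∃ w w' : ℝ → ℝ, w 0 = 0 ∧ w 1 = 0 ∧ (∀ x, HasDerivAt w (w' x) x) ∧
      ∀ x, HasDerivAt w' (m * w x - h x) x := by
  obtain ⟨S, C, hS, hC, hW, hS0, hS1⟩ := exists_fundamental hm
  have cS : Continuous S := continuous_iff_continuousAt.2 fun x => (hS x).continuousAt
  have cC : Continuous C := continuous_iff_continuousAt.2 fun x => (hC x).continuousAt
  set P : ℝ → ℝ := fun x => ∫ y in (0:ℝ)..x, C y * h y with hP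
  set Q : ℝ → ℝ := fun x => ∫ y in (0:ℝ)..x, S y * h y with hQ
  have dP : ∀ x, HasDerivAt P (C x * h x) x := fun x =>
    integral_hasDerivAt_right ((cC.mul hh).intervalIntegrable _ _)
      (cC.mul hh).aestronglyMeasurable.stronglyMeasurableAtFilter (cC.mul hh).continuousAt
  have dQ : ∀ x, HasDerivAt Q (S x * h x) x := fun x =>
    integral_hasDerivAt_right ((cS.mul hh).intervalIntegrable _ _)
      (cS.mul hh).aestronglyMeasurable.stronglyMeasurableAtFilter (cS.mul hh).continuousAt
  -- the multiple of `S` that corrects the value at `1`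
  set c := (S 1 * P 1 - C 1 * Q 1) / S 1 with hcdef
  refine ⟨fun x => c * S x - (S x * P x - C x * Q x),
    fun x => c * C x - (C x * P x - m * S x * Q x), ?_, ?_, fun x => ?_, fun x => ?_⟩
  · simp [hS0, hQ]
  · simp only [hcdef]; field_simp; ring
  · refine HasDerivAt.congr_deriv (((hS x).const_mul c).sub
      (((hS x).mul (dP x)).sub ((hC x).mul (dQ x)))) ?_
    ring
  · refine HasDerivAt.congr_deriv (((hC x).const_mul c).sub
      (((hC x).mul (dP x)).sub ((((hS x).const_mul m)).mul (dQ x)))) ?_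
    linear_combination -h x * hW x

theorem exists_isSol {m : ℝ} (hm : 0 ≤ m) {h : ℝ → ℝ} (hh : Continuous h) :
    ∃ w, Continuous w ∧ IsSol m h w := by
  obtain ⟨w, w', h0, h1, h2, h3⟩ := exists_global hm hh
  have hc : Continuous w := continuous_iff_continuousAt.2 fun x => (h2 x).continuousAt
  exact ⟨w, hc, hc.continuousOn, h0, h1, w', fun x _ => h2 x, fun x _ => h3 x⟩

theorem exists_ext {h : ℝ → ℝ} (hh : ContinuousOn h (Icc 0 1)) :
    ∃ k : ℝ → ℝ, Continuous k ∧ EqOn k h (Icc 0 1) :=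
  ⟨IccExtend zero_le_one ((Icc (0:ℝ) 1).domRestrict h), hh.domRestrict.Icc_extend',
    fun x hx => by simp [IccExtend_of_mem _ _ hx, Set.domRestrict]⟩

/-! ### The Green function of `-d²/dx²` and passage to the limit -/

/-- The Green operator of `-d²/dx²` with Dirichlet conditions on `[0,1]`: its kernel is
`x (1 - y)` for `x ≤ y` and `y (1 - x)` for `y ≤ x`. -/
noncomputable def G0 (h : ℝ → ℝ) (x : ℝ) : ℝ :=
  ∫ y in (0:ℝ)..1, (min x y * (1 - max x y)) * h y

theorem IsSol.eq_G0 {h w : ℝ → ℝ} (hh : ContinuousOn h (Icc 0 1)) (H : IsSol 0 h w) :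
    ∀ x ∈ Icc (0:ℝ) 1, w x = G0 h x := by
  obtain ⟨k, hk, hkh⟩ := exists_ext hh
  obtain ⟨v, v', h0, h1, h2, h3⟩ := exists_global le_rfl hk
  have hc : Continuous v := continuous_iff_continuousAt.2 fun x => (h2 x).continuousAt
  have Hv : IsSol 0 k v := ⟨hc.continuousOn, h0, h1, v', fun x _ => h2 x, fun x _ => h3 x⟩
  have hwv : EqOn w v (Icc 0 1) := H.unique le_rfl
    (Hv.congr (fun _ _ => rfl) fun x hx => by rw [hkh (Ioo_subset_Icc_self hx)])
  intro x hx
  have e1 : G0 h x = ∫ y in (0:ℝ)..1, (min x y * (1 - max x y)) * k y := by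
    apply integral_congr
    intro y hy
    rw [uIcc_of_le zero_le_one] at hy
    simp only [hkh hy]
  have ci : Continuous fun y => (min x y * (1 - max x y)) * k y := by fun_prop
  -- on `[0, x]` an antiderivative of `y k(y) = -y v''(y)` is `v - y v'`
  have e2 : ∫ y in (0:ℝ)..x, (min x y * (1 - max x y)) * k y = (1 - x) * (v x - x * v' x) := by
    have : ∫ y in (0:ℝ)..x, y * k y = (v x - x * v' x) - (v 0 - 0 * v' 0) := by
      apply integral_eq_sub_of_hasDerivAt (f := fun y => v y - y * v' y)
      · intro y _
        refine HasDerivAt.congr_deriv ((h2 y).sub ((hasDerivAt_id y).mul (h3 y))) ?_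
        simp
      · exact (continuous_id.mul hk).intervalIntegrable _ _
    rw [h0] at this
    rw [show v x - x * v' x = ∫ y in (0:ℝ)..x, y * k y by rw [this]; ring,
      ← intervalIntegral.integral_const_mul]
    apply integral_congr
    intro y hy
    rw [uIcc_of_le hx.1] at hy
    simp only [min_eq_right hy.2, max_eq_left hy.2]; ring
  -- on `[x, 1]` an antiderivative of `(1 - y) k(y)` is `-(1 - y) v' - v`
  have e3 : ∫ y in x..1, (min x y * (1 - max x y)) * k y = x * ((1 - x) * v' x + v x) := by
    have : ∫ y in x..1, (1 - y) * k y =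
        (-((1 - 1) * v' 1) - v 1) - (-((1 - x) * v' x) - v x) := by
      apply integral_eq_sub_of_hasDerivAt (f := fun y => -((1 - y) * v' y) - v y)
      · intro y _
        refine HasDerivAt.congr_deriv
          (((((hasDerivAt_id y).const_sub 1).mul (h3 y)).neg).sub (h2 y)) ?_
        simp
      · exact ((continuous_const.sub continuous_id).mul hk).intervalIntegrable _ _
    rw [h1] at this
    rw [show (1 - x) * v' x + v x = ∫ y in x..1, (1 - y) * k y by rw [this]; ring,
      ← intervalIntegral.integral_const_mul]
    apply integral_congr
    intro y hy
    rw [uIcc_of_le hx.2] at hy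
    simp only [min_eq_left hy.1, max_eq_right hy.1]; ring
  rw [hwv hx, e1, ← integral_add_adjacent_intervals (ci.intervalIntegrable 0 x)
    (ci.intervalIntegrable x 1), e2, e3]
  ring

/-- Bounded pointwise limits of solutions satisfy the integral equation, and are continuous because
the Green operator maps bounded measurable functions to continuous ones. The limit right-hand side
is not known to be continuous, which is why the conclusion is not stated as `IsSol`. -/
theorem limit_G0 {h w : ℕ → ℝ → ℝ} {hl wl : ℝ → ℝ} {B : ℝ}
    (hh : ∀ n, ContinuousOn (h n) (Icc 0 1)) (hB : ∀ n, ∀ x ∈ Icc (0:ℝ) 1, |h n x| ≤ B)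
    (H : ∀ n, IsSol 0 (h n) (w n))
    (lh : ∀ x ∈ Icc (0:ℝ) 1, Tendsto (fun n => h n x) atTop (𝓝 (hl x)))
    (lw : ∀ x ∈ Icc (0:ℝ) 1, Tendsto (fun n => w n x) atTop (𝓝 (wl x))) :
    ContinuousOn wl (Icc 0 1) ∧ ∀ x ∈ Icc (0:ℝ) 1, wl x = G0 hl x := by
  have hker : ∀ x ∈ Icc (0:ℝ) 1, ∀ y ∈ Ioc (0:ℝ) 1, |min x y * (1 - max x y)| ≤ 1 := by
    intro x hx y hy
    have a1 : 0 ≤ min x y := le_min hx.1 hy.1.le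
    have a2 : min x y ≤ 1 := (min_le_left _ _).trans hx.2
    have a3 : max x y ≤ 1 := max_le hx.2 hy.2
    have a4 : 0 ≤ max x y := hx.1.trans (le_max_left _ _)
    rw [abs_of_nonneg (mul_nonneg a1 (by linarith))]
    nlinarith
  have hmeas : ∀ n, AEStronglyMeasurable (h n) (volume.restrict (Ioc (0:ℝ) 1)) := fun n =>
    ((hh n).mono Ioc_subset_Icc_self).aestronglyMeasurable measurableSet_Ioc
  have hk : ∀ x : ℝ, Continuous fun y : ℝ => min x y * (1 - max x y) := fun x => by fun_prop
  have hmeas' : AEStronglyMeasurable hl (volume.restrict (Ioc (0:ℝ) 1)) := by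
    refine aestronglyMeasurable_of_tendsto_ae atTop hmeas ?_
    filter_upwards [ae_restrict_mem measurableSet_Ioc] with y hy
      using lh y (Ioc_subset_Icc_self hy)
  have hB' : ∀ y ∈ Icc (0:ℝ) 1, |hl y| ≤ B := fun y hy =>
    le_of_tendsto (lh y hy).abs (Eventually.of_forall fun n => hB n y hy)
  have key : ∀ x ∈ Icc (0:ℝ) 1, wl x = G0 hl x := by
    intro x hx
    refine tendsto_nhds_unique (lw x hx) ?_
    simp only [fun n => (H n).eq_G0 (hh n) x hx]
    refine intervalIntegral.tendsto_integral_filter_of_dominated_convergence (fun _ => B)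
      (Eventually.of_forall fun n => ?_) (Eventually.of_forall fun n => ?_) (by simp) ?_
    · rw [uIoc_of_le zero_le_one]
      exact (hk x).aestronglyMeasurable.mul (hmeas n)
    · refine Eventually.of_forall fun y hy => ?_
      rw [uIoc_of_le zero_le_one] at hy
      rw [Real.norm_eq_abs, abs_mul]
      calc _ ≤ 1 * |h n y| := mul_le_mul_of_nonneg_right (hker x hx y hy) (abs_nonneg _)
        _ ≤ B := by rw [one_mul]; exact hB n y (Ioc_subset_Icc_self hy)
    · refine Eventually.of_forall fun y hy => ?_
      rw [uIoc_of_le zero_le_one] at hy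
      exact (lh y (Ioc_subset_Icc_self hy)).const_mul _
  refine ⟨ContinuousOn.congr (f := G0 hl) ?_ key, key⟩
  have : ContinuousOn (fun x => ∫ y in Ioc (0:ℝ) 1, (min x y * (1 - max x y)) * hl y)
      (Icc 0 1) := by
    refine MeasureTheory.continuousOn_of_dominated (bound := fun _ => B) (fun x _ => ?_)
      (fun x hx => ?_) (by simp) ?_
    · exact (hk x).aestronglyMeasurable.mul hmeas'
    · filter_upwards [ae_restrict_mem measurableSet_Ioc] with y hy
      rw [Real.norm_eq_abs, abs_mul]
      calc _ ≤ 1 * |hl y| := mul_le_mul_of_nonneg_right (hker x hx y hy) (abs_nonneg _)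
        _ ≤ B := by rw [one_mul]; exact hB' y (Ioc_subset_Icc_self hy)
    · exact Eventually.of_forall fun y => by fun_prop
  refine this.congr fun x _ => ?_
  rw [G0, integral_of_le zero_le_one]

theorem isSol_of_G0 {h w : ℝ → ℝ} (hh : ContinuousOn h (Icc 0 1))
    (hw : ∀ x ∈ Icc (0:ℝ) 1, w x = G0 h x) : IsSol 0 h w := by
  obtain ⟨k, hk, hkh⟩ := exists_ext hh
  obtain ⟨v, -, Hv⟩ := exists_isSol le_rfl hk
  have Hv' : IsSol 0 h v :=
    Hv.congr (fun _ _ => rfl) fun x hx => by rw [hkh (Ioo_subset_Icc_self hx)]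
  exact Hv'.congr (fun x hx => by rw [hw x hx, Hv'.eq_G0 hh x hx]) fun _ _ => rfl

/-! ### The beam problem with a frozen coefficient -/

/-- `u` is a positive solution of `u'''' - m u'' = λ f(u)` with hinged ends, `m` being a fixed
number, and `w = -u''` is its bending moment; the fourth-order problem is written as two
second-order Dirichlet problems. -/
structure BeamSol (lam : ℝ) (f : ℝ → ℝ) (m : ℝ) (u w : ℝ → ℝ) : Prop where
  disp : IsSol 0 w u
  moment : IsSol m (fun x => lam * f (u x)) w
  pos : ∀ x ∈ Ioo (0:ℝ) 1, 0 < u x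

theorem isSol_parabola (W : ℝ) : IsSol 0 (fun _ => W) (fun x => W / 2 * (x * (1 - x))) := by
  refine ⟨by fun_prop, by simp, by simp, fun x => W / 2 * (1 - 2 * x), fun x _ => ?_,
    fun x _ => ?_⟩
  · refine HasDerivAt.congr_deriv (((hasDerivAt_id x).mul
      ((hasDerivAt_id x).const_sub 1)).const_mul (W / 2)) ?_
    simp; left; ring
  · refine HasDerivAt.congr_deriv (((((hasDerivAt_id x).const_mul 2)).const_sub 1).const_mul
      (W / 2)) ?_
    simp

theorem IsSol.concaveOn {w u : ℝ → ℝ} (H : IsSol 0 w u)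
    (hw : ∀ x ∈ Ioo (0:ℝ) 1, 0 ≤ w x) : ConcaveOn ℝ (Icc (0:ℝ) 1) u := by
  obtain ⟨u', h1, h2⟩ := H.ode
  apply concaveOn_of_hasDerivWithinAt2_nonpos (convex_Icc 0 1) H.cont (f' := u')
    (f'' := fun x => 0 * u x - w x)
  · intro x hx; rw [interior_Icc] at hx ⊢; exact (h1 x hx).hasDerivWithinAt
  · intro x hx; rw [interior_Icc] at hx ⊢; exact (h2 x hx).hasDerivWithinAt
  · intro x hx; rw [interior_Icc] at hx; simpa using hw x hx

/-- By concavity `u` lies above the two chords through its midpoint value, hence above a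
parabola. -/
theorem IsSol.lower {w u : ℝ → ℝ} (H : IsSol 0 w u) (hw : ∀ x ∈ Ioo (0:ℝ) 1, 0 ≤ w x) :
    ∀ x ∈ Icc (0:ℝ) 1, 2 * u (1 / 2) * (x * (1 - x)) ≤ u x := by
  intro x hx
  have hc := H.concaveOn hw
  have hm : (1 / 2 : ℝ) ∈ Icc (0:ℝ) 1 := by constructor <;> norm_num
  have hp := H.nonneg le_rfl hw _ hm
  have h1 := mul_nonneg hp hx.1
  have h2 := mul_nonneg hp (sub_nonneg.2 hx.2)
  rcases le_total x (1 / 2) with h | h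
  · have := hc.2 (left_mem_Icc.2 zero_le_one) hm (by linarith : 0 ≤ 1 - 2 * x)
      (by linarith [hx.1] : 0 ≤ 2 * x) (by ring)
    rw [show (1 - 2 * x) • (0:ℝ) + (2 * x) • (1 / 2 : ℝ) = x by simp only [smul_eq_mul]; ring,
      H.left] at this
    simp only [smul_eq_mul] at this
    nlinarith [mul_nonneg h1 hx.1]
  · have := hc.2 (right_mem_Icc.2 zero_le_one) hm (by linarith : 0 ≤ 2 * x - 1)
      (by linarith [hx.2] : 0 ≤ 2 - 2 * x) (by ring)
    rw [show (2 * x - 1) • (1:ℝ) + (2 - 2 * x) • (1 / 2 : ℝ) = x by simp; ring, H.right] at this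
    simp only [smul_eq_mul] at this
    nlinarith [mul_nonneg h2 (sub_nonneg.2 hx.2)]

theorem IsSol.upper {w u : ℝ → ℝ} (H : IsSol 0 w u) (hw : ∀ x ∈ Ioo (0:ℝ) 1, 0 ≤ w x)
    (hwc : ContinuousOn w (Icc 0 1)) :
    ∃ C, 0 < C ∧ ∀ x ∈ Icc (0:ℝ) 1, u x ≤ C * (x * (1 - x)) := by
  obtain ⟨W, hW⟩ := isCompact_Icc.bddAbove_image hwc
  refine ⟨(max W 1) / 2, by positivity, ?_⟩
  refine H.mono le_rfl le_rfl (isSol_parabola _) hw fun x hx => le_max_of_le_left ?_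
  exact hW (mem_image_of_mem _ (Ioo_subset_Icc_self hx))

section Nonlinear

variable {f : ℝ → ℝ} {lam : ℝ}

theorem BeamSol.rhs_nonneg (hfp : ∀ s : ℝ, 0 < s → 0 < f s) (hlam : 0 < lam) {m : ℝ}
    {u w : ℝ → ℝ} (H : BeamSol lam f m u w) : ∀ x ∈ Ioo (0:ℝ) 1, 0 ≤ lam * f (u x) :=
  fun x hx => (mul_pos hlam (hfp _ (H.pos x hx))).le

theorem BeamSol.moment_nonneg (hfp : ∀ s : ℝ, 0 < s → 0 < f s) (hlam : 0 < lam) {m : ℝ}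
    (hm : 0 ≤ m) {u w : ℝ → ℝ} (H : BeamSol lam f m u w) : ∀ x ∈ Icc (0:ℝ) 1, 0 ≤ w x :=
  H.moment.nonneg hm (H.rhs_nonneg hfp hlam)

/-- Any two positive solutions are comparable up to a factor, both being comparable with the
parabola `x (1 - x)`. This starts the iteration in `BeamSol.le`. -/
theorem BeamSol.exists_scale (hfp : ∀ s : ℝ, 0 < s → 0 < f s) (hlam : 0 < lam) {m m' : ℝ}
    (hm : 0 ≤ m) (hm' : 0 ≤ m') {u w v z : ℝ → ℝ}
    (H : BeamSol lam f m u w) (H' : BeamSol lam f m' v z) :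
    ∃ t, 0 < t ∧ t < 1 ∧ ∀ x ∈ Icc (0:ℝ) 1, t * u x ≤ v x := by
  obtain ⟨C, hC, huC⟩ := H.disp.upper
    (fun x hx => H.moment_nonneg hfp hlam hm x (Ioo_subset_Icc_self hx)) H.moment.cont
  have hv := H'.disp.lower
    (fun x hx => H'.moment_nonneg hfp hlam hm' x (Ioo_subset_Icc_self hx))
  have hc : 0 < v (1 / 2) := H'.pos _ (by constructor <;> norm_num)
  set t := min (1 / 2) (2 * v (1 / 2) / C)
  have ht : 0 < t := lt_min (by norm_num) (by positivity)
  refine ⟨t, ht, (min_le_left _ _).trans_lt (by norm_num), fun x hx => ?_⟩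
  have hxx : 0 ≤ x * (1 - x) := mul_nonneg hx.1 (sub_nonneg.2 hx.2)
  calc t * u x ≤ t * (C * (x * (1 - x))) := mul_le_mul_of_nonneg_left (huC x hx) ht.le
    _ ≤ (2 * v (1 / 2) / C) * (C * (x * (1 - x))) :=
      mul_le_mul_of_nonneg_right (min_le_right _ _) (by positivity)
    _ = 2 * v (1 / 2) * (x * (1 - x)) := by field_simp
    _ ≤ v x := hv x hx

/-- Comparison: displacement and moment of a positive solution decrease when the coefficient
increases. With `m = m'` this is uniqueness. -/
theorem BeamSol.le (hfp : ∀ s : ℝ, 0 < s → 0 < f s) (hmono : Monotone f) (hlam : 0 < lam)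
    {α : ℝ} (hα0 : 0 < α) (hα1 : α < 1)
    (hconc : ∀ τ : ℝ, 0 < τ → τ < 1 → ∀ s : ℝ, 0 < s → τ ^ α * f s ≤ f (τ * s))
    {m m' : ℝ} (hm' : 0 ≤ m') (hmm : m' ≤ m) {u w v z : ℝ → ℝ}
    (H : BeamSol lam f m u w) (H' : BeamSol lam f m' v z) :
    (∀ x ∈ Icc (0:ℝ) 1, u x ≤ v x) ∧ ∀ x ∈ Icc (0:ℝ) 1, w x ≤ z x := by
  have hm := hm'.trans hmm
  obtain ⟨t, ht0, ht1, ht⟩ := H.exists_scale hfp hlam hm hm' H'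
  have hw := H.moment_nonneg hfp hlam hm
  -- concavity of `f` improves the comparison factor from `s` to `s ^ α`
  have step : ∀ s : ℝ, 0 < s → s < 1 → (∀ x ∈ Icc (0:ℝ) 1, s * u x ≤ v x) →
      ∀ x ∈ Icc (0:ℝ) 1, s ^ α * u x ≤ v x := by
    intro s hs0 hs1 hs
    have hsα : 0 ≤ s ^ α := (rpow_pos_of_pos hs0 α).le
    have h1 := (H.moment.smul (s ^ α)).mono hm' hmm H'.moment
      (fun x hx => mul_nonneg hsα (H.rhs_nonneg hfp hlam x hx)) fun x hx => by
        have e1 := hconc s hs0 hs1 _ (H.pos x hx)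
        have e2 := hmono (hs x (Ioo_subset_Icc_self hx))
        calc s ^ α * (lam * f (u x)) = lam * (s ^ α * f (u x)) := by ring
          _ ≤ lam * f (v x) := mul_le_mul_of_nonneg_left (e1.trans e2) hlam.le
    exact (H.disp.smul (s ^ α)).mono le_rfl le_rfl H'.disp
      (fun x hx => mul_nonneg hsα (hw x (Ioo_subset_Icc_self hx)))
      (fun x hx => h1 x (Ioo_subset_Icc_self hx))
  have iter : ∀ n : ℕ, ∀ x ∈ Icc (0:ℝ) 1, t ^ (α ^ n) * u x ≤ v x := by
    intro n
    induction n with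
    | zero => simpa using ht
    | succ n ih =>
      have := step (t ^ (α ^ n)) (rpow_pos_of_pos ht0 _)
        (rpow_lt_one ht0.le ht1 (pow_pos hα0 n)) ih
      simpa only [← rpow_mul ht0.le, ← pow_succ] using this
  have huv : ∀ x ∈ Icc (0:ℝ) 1, u x ≤ v x := by
    intro x hx
    have h1 : Tendsto (fun n : ℕ => α ^ n) atTop (𝓝 0) :=
      tendsto_pow_atTop_nhds_zero_of_lt_one hα0.le hα1
    have h2 : Tendsto (fun n : ℕ => t ^ (α ^ n) * u x) atTop (𝓝 (t ^ (0:ℝ) * u x)) :=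
      (((continuousAt_const_rpow ht0.ne').tendsto).comp h1).mul_const _
    rw [rpow_zero, one_mul] at h2
    exact le_of_tendsto h2 (Eventually.of_forall fun n => iter n x hx)
  exact ⟨huv, H.moment.mono hm' hmm H'.moment (H.rhs_nonneg hfp hlam) fun x hx =>
    mul_le_mul_of_nonneg_left (hmono (huv x (Ioo_subset_Icc_self hx))) hlam.le⟩

/-- Closedness of the system under bounded pointwise limits, with the coefficient varying. The
displacement `p n` produced by the moment `w n` is allowed to differ from the displacement `u n`
that enters the nonlinearity, as it does along an iteration. -/
theorem limit_pair (hf : Continuous f) (hf0 : f 0 = 0) (hmono : Monotone f) (hlam : 0 < lam)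
    {u p w : ℕ → ℝ → ℝ} {μ : ℕ → ℝ} {ul wl : ℝ → ℝ} {m M R : ℝ}
    (hu : ∀ n, ContinuousOn (u n) (Icc 0 1))
    (h1 : ∀ n, IsSol 0 (w n) (p n)) (h2 : ∀ n, IsSol (μ n) (fun x => lam * f (u n x)) (w n))
    (hub : ∀ n, ∀ x ∈ Icc (0:ℝ) 1, 0 ≤ u n x ∧ u n x ≤ M)
    (hwb : ∀ n, ∀ x ∈ Icc (0:ℝ) 1, 0 ≤ w n x ∧ w n x ≤ M)
    (hμb : ∀ n, 0 ≤ μ n ∧ μ n ≤ R)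
    (lu : ∀ x ∈ Icc (0:ℝ) 1, Tendsto (fun n => u n x) atTop (𝓝 (ul x)))
    (lp : ∀ x ∈ Icc (0:ℝ) 1, Tendsto (fun n => p n x) atTop (𝓝 (ul x)))
    (lw : ∀ x ∈ Icc (0:ℝ) 1, Tendsto (fun n => w n x) atTop (𝓝 (wl x)))
    (lμ : Tendsto μ atTop (𝓝 m)) :
    IsSol 0 wl ul ∧ IsSol m (fun x => lam * f (ul x)) wl := by
  have hwabs : ∀ n, ∀ x ∈ Icc (0:ℝ) 1, |w n x| ≤ M := fun n x hx => by
    rw [abs_of_nonneg (hwb n x hx).1]; exact (hwb n x hx).2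
  obtain ⟨cu, eu⟩ := limit_G0 (fun n => (h2 n).cont) hwabs h1 lw lp
  have h2' : ∀ n, IsSol 0 (fun x => lam * f (u n x) - μ n * w n x) (w n) := fun n =>
    (h2 n).congr (fun _ _ => rfl) fun x _ => by ring
  obtain ⟨cw, ew⟩ := limit_G0 (B := lam * f M + R * M)
    (h := fun n x => lam * f (u n x) - μ n * w n x)
    (hl := fun x => lam * f (ul x) - m * wl x)
    (fun n => (continuousOn_const.mul (hf.comp_continuousOn (hu n))).sub
      (continuousOn_const.mul (h2 n).cont))
    (fun n x hx => by
      have e1 : 0 ≤ f (u n x) := hf0 ▸ hmono (hub n x hx).1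
      have e2 : lam * f (u n x) ≤ lam * f M :=
        mul_le_mul_of_nonneg_left (hmono (hub n x hx).2) hlam.le
      have e3 : 0 ≤ μ n * w n x := mul_nonneg (hμb n).1 (hwb n x hx).1
      have e4 : μ n * w n x ≤ R * M :=
        mul_le_mul (hμb n).2 (hwb n x hx).2 (hwb n x hx).1 ((hμb n).1.trans (hμb n).2)
      have e5 := mul_nonneg hlam.le e1
      rw [abs_le]; constructor <;> linarith) h2'
    (fun x hx => (((hf.tendsto _).comp (lu x hx)).const_mul lam).sub (lμ.mul (lw x hx))) lw
  refine ⟨isSol_of_G0 cw eu, ?_⟩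
  exact (isSol_of_G0 (h := fun x => lam * f (ul x) - m * wl x)
    ((continuousOn_const.mul (hf.comp_continuousOn cu)).sub
    (continuousOn_const.mul cw)) ew).congr (fun _ _ => rfl) fun x _ => by ring

/-- Existence for a frozen coefficient `m`. The constant `M` is a supersolution, and the iteration
decreases from it; bounds by `M` survive in the limit, and are uniform in `m` because `M` can be
chosen for the smallest coefficient. -/
theorem exists_beamSol (hf : Continuous f) (hf0 : f 0 = 0) (hmono : Monotone f) (hlam : 0 < lam)
    (hf0' : Tendsto (fun s => f s / s) (𝓝[>] (0:ℝ)) atTop)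
    {m M : ℝ} (hm : 0 ≤ m) (hM : 0 < M) (hMf : lam * f M ≤ m * M) :
    ∃ u w, BeamSol lam f m u w ∧ ∀ x ∈ Icc (0:ℝ) 1, u x ≤ M ∧ w x ≤ M := by
  have hT : ∀ u : ℝ → ℝ, ∃ w p : ℝ → ℝ, Continuous u → Continuous p ∧ Continuous w ∧
      IsSol m (fun x => lam * f (u x)) w ∧ IsSol 0 w p := by
    intro u
    by_cases hu : Continuous u
    · obtain ⟨w, cw, hw⟩ := exists_isSol hm (continuous_const.mul (hf.comp hu) :
        Continuous fun x => lam * f (u x))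
      obtain ⟨p, cp, hp⟩ := exists_isSol le_rfl cw
      exact ⟨w, p, fun _ => ⟨cp, cw, hw, hp⟩⟩
    · exact ⟨u, u, fun h => absurd h hu⟩
  -- `W u` is the moment generated by the load `λ f(u)`, and `P u` the resulting displacement
  choose W P hWP using hT
  set U : ℕ → ℝ → ℝ := fun n => P^[n] (fun _ => M) with hU
  have hUs : ∀ n, U (n + 1) = P (U n) := fun n => Function.iterate_succ_apply' P n _
  have cU : ∀ n, Continuous (U n) := by
    intro n
    induction n with
    | zero => exact continuous_const
    | succ n ih => rw [hUs]; exact (hWP _ ih).1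
  have hw : ∀ n, IsSol m (fun x => lam * f (U n x)) (W (U n)) := fun n => (hWP _ (cU n)).2.2.1
  have hp : ∀ n, IsSol 0 (W (U n)) (U (n + 1)) := fun n => hUs n ▸ (hWP _ (cU n)).2.2.2
  -- below `ε` the nonlinearity dominates the line whose slope makes `sin (π x)` a subsolution
  obtain ⟨ε, hε0, hεM, hε⟩ : ∃ ε, 0 < ε ∧ ε ≤ M ∧ ∀ s, 0 < s → s ≤ ε →
      π ^ 2 * (π ^ 2 + m) / lam * s ≤ f s := by
    have := hf0'.eventually_ge_atTop (π ^ 2 * (π ^ 2 + m) / lam)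
    rw [eventually_iff, mem_nhdsGT_iff_exists_Ioc_subset] at this
    obtain ⟨ε, hε, hs⟩ := this
    refine ⟨min ε M, lt_min hε hM, min_le_right _ _, fun s hs0 hs1 => ?_⟩
    have := hs ⟨hs0, hs1.trans (min_le_left _ _)⟩
    exact (le_div_iff₀ hs0).1 this
  have hsin : ∀ x ∈ Ioo (0:ℝ) 1, 0 < sin (π * x) := fun x hx =>
    sin_pos_of_pos_of_lt_pi (mul_pos pi_pos hx.1) (by nlinarith [pi_pos, hx.2])
  have hsin' : ∀ x ∈ Icc (0:ℝ) 1, 0 ≤ sin (π * x) := fun x hx =>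
    sin_nonneg_of_nonneg_of_le_pi (mul_nonneg pi_pos.le hx.1) (by nlinarith [pi_pos, hx.2])
  have hUlow : ∀ n, ∀ x ∈ Icc (0:ℝ) 1, ε * sin (π * x) ≤ U n x := by
    intro n
    induction n with
    | zero =>
      intro x hx
      show _ ≤ M
      nlinarith [sin_le_one (π * x), hsin' x hx]
    | succ n ih =>
      have s1 : ∀ x ∈ Icc (0:ℝ) 1, ε * π ^ 2 * sin (π * x) ≤ W (U n) x := by
        refine ((isSol_sin m).smul (ε * π ^ 2)).mono hm le_rfl (hw n) (fun x hx => ?_)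
          fun x hx => ?_
        · have := hsin x hx
          positivity
        · have h0 := hsin x hx
          have h1 := hε (ε * sin (π * x)) (by positivity)
            (by nlinarith [sin_le_one (π * x)])
          have h2 := mul_le_mul_of_nonneg_left
            (h1.trans (hmono (ih x (Ioo_subset_Icc_self hx)))) hlam.le
          refine le_trans (le_of_eq ?_) h2
          field_simp
      have s2 := (isSol_sin 0).smul ε
      refine s2.mono le_rfl le_rfl (hp n) (fun x hx => ?_) fun x hx => ?_
      · have := hsin x hx
        positivity
      · have := s1 x (Ioo_subset_Icc_self hx)
        linarith
  have hU0 : ∀ n, ∀ x ∈ Icc (0:ℝ) 1, 0 ≤ U n x := fun n x hx =>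
    (mul_nonneg hε0.le (hsin' x hx)).trans (hUlow n x hx)
  have hr0 : ∀ n, ∀ x ∈ Ioo (0:ℝ) 1, 0 ≤ lam * f (U n x) := fun n x hx =>
    mul_nonneg hlam.le (hf0 ▸ hmono (hU0 n x (Ioo_subset_Icc_self hx)))
  have hw0 : ∀ n, ∀ x ∈ Icc (0:ℝ) 1, 0 ≤ W (U n) x := fun n => (hw n).nonneg hm (hr0 n)
  have hWstep : ∀ i j, (∀ x ∈ Icc (0:ℝ) 1, U i x ≤ U j x) →
      ∀ x ∈ Icc (0:ℝ) 1, W (U i) x ≤ W (U j) x := fun i j hij =>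
    (hw i).mono hm le_rfl (hw j) (hr0 i) fun x hx =>
      mul_le_mul_of_nonneg_left (hmono (hij x (Ioo_subset_Icc_self hx))) hlam.le
  have hWM : ∀ n, (∀ x ∈ Icc (0:ℝ) 1, U n x ≤ M) → ∀ x ∈ Icc (0:ℝ) 1, W (U n) x ≤ M :=
    fun n hn => (hw n).le_const hm hM.le fun x hx =>
      (mul_le_mul_of_nonneg_left (hmono (hn x (Ioo_subset_Icc_self hx))) hlam.le).trans hMf
  have hUdec : ∀ n, ∀ x ∈ Icc (0:ℝ) 1, U (n + 1) x ≤ U n x := by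
    intro n
    induction n with
    | zero =>
      have h1 := hWM 0 fun x _ => le_rfl
      intro x hx
      have h2 := (hp 0).mono le_rfl le_rfl (isSol_parabola M)
        (fun x hx => hw0 0 x (Ioo_subset_Icc_self hx))
        (fun x hx => h1 x (Ioo_subset_Icc_self hx)) x hx
      have h3 : x * (1 - x) ≤ 1 := by nlinarith [hx.1, hx.2]
      show _ ≤ M
      nlinarith [mul_le_mul_of_nonneg_left h3 hM.le]
    | succ n ih =>
      have h1 := hWstep _ _ ih
      exact (hp (n + 1)).mono le_rfl le_rfl (hp n)
        (fun x hx => hw0 _ x (Ioo_subset_Icc_self hx)) fun x hx => h1 x (Ioo_subset_Icc_self hx)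
  have aU : ∀ x ∈ Icc (0:ℝ) 1, Antitone fun n => U n x := fun x hx =>
    antitone_nat_of_succ_le fun n => hUdec n x hx
  have aW : ∀ x ∈ Icc (0:ℝ) 1, Antitone fun n => W (U n) x := fun x hx =>
    antitone_nat_of_succ_le fun n => hWstep _ _ (hUdec n) x hx
  have hUM : ∀ n, ∀ x ∈ Icc (0:ℝ) 1, U n x ≤ M := fun n x hx => aU x hx (Nat.zero_le n)
  have lU : ∀ x ∈ Icc (0:ℝ) 1, Tendsto (fun n => U n x) atTop (𝓝 (⨅ n, U n x)) := fun x hx =>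
    tendsto_atTop_ciInf (aU x hx) ⟨0, by rintro _ ⟨n, rfl⟩; exact hU0 n x hx⟩
  have lW : ∀ x ∈ Icc (0:ℝ) 1, Tendsto (fun n => W (U n) x) atTop (𝓝 (⨅ n, W (U n) x)) :=
    fun x hx => tendsto_atTop_ciInf (aW x hx) ⟨0, by rintro _ ⟨n, rfl⟩; exact hw0 n x hx⟩
  obtain ⟨r1, r2⟩ := limit_pair (R := m) hf hf0 hmono hlam (fun n => (cU n).continuousOn) hp hw
    (fun n x hx => ⟨hU0 n x hx, hUM n x hx⟩)
    (fun n x hx => ⟨hw0 n x hx, hWM n (hUM n) x hx⟩) (fun _ => ⟨hm, le_rfl⟩) lU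
    (fun x hx => (lU x hx).comp (tendsto_add_atTop_nat 1)) lW tendsto_const_nhds
  refine ⟨_, _, ⟨r1, r2, fun x hx => ?_⟩, fun x hx => ⟨?_, ?_⟩⟩
  · exact (mul_pos hε0 (hsin x hx)).trans_le (ge_of_tendsto (lU x (Ioo_subset_Icc_self hx))
      (Eventually.of_forall fun n => hUlow n x (Ioo_subset_Icc_self hx)))
  · exact le_of_tendsto (lU x hx) (Eventually.of_forall fun n => hUM n x hx)
  · exact le_of_tendsto (lW x hx) (Eventually.of_forall fun n => hWM n (hUM n) x hx)

end Nonlinear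

/-! ### The energy as a function of the coefficient -/

/-- The identity `∫ (u')² = ∫ u w` for `w = -u''`. It turns the Kirchhoff term into a quantity that
is monotone in the pair `(u, w)`. -/
theorem integral_sq_deriv {u u' w : ℝ → ℝ} (cu : ContinuousOn u (Icc 0 1))
    (cu' : ContinuousOn u' (Icc 0 1)) (cw : ContinuousOn w (Icc 0 1))
    (h0 : u 0 = 0) (h1 : u 1 = 0) (hd : ∀ x ∈ Ioo (0:ℝ) 1, HasDerivAt u (u' x) x)
    (hd' : ∀ x ∈ Ioo (0:ℝ) 1, HasDerivAt u' (-w x) x) :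
    ∫ x in (0:ℝ)..1, u' x ^ 2 = ∫ x in (0:ℝ)..1, u x * w x := by
  have i1 : IntervalIntegrable (fun x => u' x ^ 2) volume 0 1 :=
    ContinuousOn.intervalIntegrable_of_Icc zero_le_one (cu'.pow 2)
  have i2 : IntervalIntegrable (fun x => u x * w x) volume 0 1 :=
    ContinuousOn.intervalIntegrable_of_Icc zero_le_one (cu.mul cw)
  have := integral_eq_sub_of_hasDerivAt_of_le zero_le_one (f := fun x => u x * u' x)
    (f' := fun x => u' x ^ 2 - u x * w x) (cu.mul cu')
    (fun x hx => ((hd x hx).mul (hd' x hx)).congr_deriv (by ring)) (i1.sub i2)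
  rw [intervalIntegral.integral_sub i1 i2, h0, h1] at this
  linarith

theorem integral_mul_mono {u w v z : ℝ → ℝ} (cu : ContinuousOn u (Icc 0 1))
    (cw : ContinuousOn w (Icc 0 1)) (cv : ContinuousOn v (Icc 0 1))
    (cz : ContinuousOn z (Icc 0 1)) (hw : ∀ x ∈ Icc (0:ℝ) 1, 0 ≤ w x)
    (hv : ∀ x ∈ Icc (0:ℝ) 1, 0 ≤ v x)
    (huv : ∀ x ∈ Icc (0:ℝ) 1, u x ≤ v x) (hwz : ∀ x ∈ Icc (0:ℝ) 1, w x ≤ z x) :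
    ∫ x in (0:ℝ)..1, u x * w x ≤ ∫ x in (0:ℝ)..1, v x * z x :=
  intervalIntegral.integral_mono_on zero_le_one
    (ContinuousOn.intervalIntegrable_of_Icc zero_le_one (cu.mul cw))
    (ContinuousOn.intervalIntegrable_of_Icc zero_le_one (cv.mul cz))
    fun x hx => mul_le_mul (huv x hx) (hwz x hx) (hw x hx) (hv x hx)

theorem BeamSol.disp_nonneg {f : ℝ → ℝ} {lam m : ℝ} {u w : ℝ → ℝ} (H : BeamSol lam f m u w) :
    ∀ x ∈ Icc (0:ℝ) 1, 0 ≤ u x := by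
  intro x hx
  rcases eq_or_lt_of_le hx.1 with rfl | h0
  · exact H.disp.left.ge
  rcases eq_or_lt_of_le hx.2 with rfl | h1
  · exact H.disp.right.ge
  exact (H.pos x ⟨h0, h1⟩).le

section Coefficient

variable {f : ℝ → ℝ} {lam α : ℝ}

/-- The energy of the positive solution decreases when the coefficient increases. -/
theorem BeamSol.integral_le (hfp : ∀ s : ℝ, 0 < s → 0 < f s) (hmono : Monotone f)
    (hlam : 0 < lam) (hα0 : 0 < α) (hα1 : α < 1)
    (hconc : ∀ τ : ℝ, 0 < τ → τ < 1 → ∀ s : ℝ, 0 < s → τ ^ α * f s ≤ f (τ * s))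
    {m m' : ℝ} (hm' : 0 ≤ m') (hmm : m' ≤ m) {u w v z : ℝ → ℝ}
    (H : BeamSol lam f m u w) (H' : BeamSol lam f m' v z) :
    ∫ x in (0:ℝ)..1, u x * w x ≤ ∫ x in (0:ℝ)..1, v x * z x := by
  obtain ⟨h1, h2⟩ := H.le hfp hmono hlam hα0 hα1 hconc hm' hmm H'
  exact integral_mul_mono H.disp.cont H.moment.cont H'.disp.cont H'.moment.cont
    (H.moment_nonneg hfp hlam (hm'.trans hmm)) H'.disp_nonneg h1 h2

/-- The energy is continuous along monotone sequences of coefficients. The solutions converge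
pointwise by `BeamSol.le`; the solution for an upper bound `R` of the coefficients keeps the limit
positive, so that uniqueness identifies it. -/
theorem tendsto_integral (hf : Continuous f) (hf0 : f 0 = 0)
    (hfp : ∀ s : ℝ, 0 < s → 0 < f s) (hmono : Monotone f)
    (hlam : 0 < lam) (hα0 : 0 < α) (hα1 : α < 1)
    (hconc : ∀ τ : ℝ, 0 < τ → τ < 1 → ∀ s : ℝ, 0 < s → τ ^ α * f s ≤ f (τ * s))
    {μ : ℕ → ℝ} {m R M : ℝ} (hμ : Monotone μ ∨ Antitone μ) (hμ0 : ∀ n, 0 ≤ μ n)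
    (hμR : ∀ n, μ n ≤ R) (lμ : Tendsto μ atTop (𝓝 m))
    {u w : ℕ → ℝ → ℝ} {u₀ w₀ uR wR : ℝ → ℝ}
    (H : ∀ n, BeamSol lam f (μ n) (u n) (w n))
    (hM : ∀ n, ∀ x ∈ Icc (0:ℝ) 1, u n x ≤ M ∧ w n x ≤ M)
    (H₀ : BeamSol lam f m u₀ w₀) (HR : BeamSol lam f R uR wR) :
    Tendsto (fun n => ∫ x in (0:ℝ)..1, u n x * w n x) atTop
      (𝓝 (∫ x in (0:ℝ)..1, u₀ x * w₀ x)) := by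
  have hm : 0 ≤ m := ge_of_tendsto' lμ hμ0
  have hcmp := fun i j (hij : μ i ≤ μ j) =>
    (H j).le hfp hmono hlam hα0 hα1 hconc (hμ0 i) hij (H i)
  have hu0 := fun n => (H n).disp_nonneg
  have hw0 := fun n => (H n).moment_nonneg hfp hlam (hμ0 n)
  have hconv : ∀ q : ℕ → ℝ, (∀ n, 0 ≤ q n ∧ q n ≤ M) → (Monotone q ∨ Antitone q) →
      ∃ l, Tendsto q atTop (𝓝 l) := by
    rintro q hq (hq' | hq')
    · exact ⟨_, tendsto_atTop_ciSup hq' ⟨M, by rintro _ ⟨n, rfl⟩; exact (hq n).2⟩⟩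
    · exact ⟨_, tendsto_atTop_ciInf hq' ⟨0, by rintro _ ⟨n, rfl⟩; exact (hq n).1⟩⟩
  have hul : ∀ x, ∃ l, x ∈ Icc (0:ℝ) 1 → Tendsto (fun n => u n x) atTop (𝓝 l) := by
    intro x
    by_cases hx : x ∈ Icc (0:ℝ) 1
    · obtain ⟨l, hl⟩ := hconv (fun n => u n x) (fun n => ⟨hu0 n x hx, (hM n x hx).1⟩)
        (hμ.symm.imp (fun h i j hij => (hcmp j i (h hij)).1 x hx)
          (fun h i j hij => (hcmp i j (h hij)).1 x hx))
      exact ⟨l, fun _ => hl⟩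
    · exact ⟨0, fun h => absurd h hx⟩
  have hwl : ∀ x, ∃ l, x ∈ Icc (0:ℝ) 1 → Tendsto (fun n => w n x) atTop (𝓝 l) := by
    intro x
    by_cases hx : x ∈ Icc (0:ℝ) 1
    · obtain ⟨l, hl⟩ := hconv (fun n => w n x) (fun n => ⟨hw0 n x hx, (hM n x hx).2⟩)
        (hμ.symm.imp (fun h i j hij => (hcmp j i (h hij)).2 x hx)
          (fun h i j hij => (hcmp i j (h hij)).2 x hx))
      exact ⟨l, fun _ => hl⟩
    · exact ⟨0, fun h => absurd h hx⟩
  choose ul hul using hul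
  choose wl hwl using hwl
  obtain ⟨r1, r2⟩ := limit_pair hf hf0 hmono hlam (fun n => (H n).disp.cont)
    (fun n => (H n).disp) (fun n => (H n).moment)
    (fun n x hx => ⟨hu0 n x hx, (hM n x hx).1⟩) (fun n x hx => ⟨hw0 n x hx, (hM n x hx).2⟩)
    (fun n => ⟨hμ0 n, hμR n⟩) hul hul hwl lμ
  have Hl : BeamSol lam f m ul wl := ⟨r1, r2, fun x hx =>
    (HR.pos x hx).trans_le (ge_of_tendsto' (hul x (Ioo_subset_Icc_self hx)) fun n =>
      (HR.le hfp hmono hlam hα0 hα1 hconc (hμ0 n) (hμR n) (H n)).1 x (Ioo_subset_Icc_self hx))⟩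
  obtain ⟨a1, a2⟩ := Hl.le hfp hmono hlam hα0 hα1 hconc hm le_rfl H₀
  obtain ⟨b1, b2⟩ := H₀.le hfp hmono hlam hα0 hα1 hconc hm le_rfl Hl
  refine intervalIntegral.tendsto_integral_filter_of_dominated_convergence (fun _ => M * M)
    (Eventually.of_forall fun n => ?_) (Eventually.of_forall fun n => ?_) (by simp) ?_
  · rw [uIoc_of_le zero_le_one]
    exact (((H n).disp.cont.mul (H n).moment.cont).mono
      Ioc_subset_Icc_self).aestronglyMeasurable measurableSet_Ioc
  · refine Eventually.of_forall fun y hy => ?_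
    rw [uIoc_of_le zero_le_one] at hy
    have hy := Ioc_subset_Icc_self hy
    rw [Real.norm_eq_abs, abs_of_nonneg (mul_nonneg (hu0 n y hy) (hw0 n y hy))]
    exact mul_le_mul (hM n y hy).1 (hM n y hy).2 (hw0 n y hy)
      ((hu0 n y hy).trans (hM n y hy).1)
  · refine Eventually.of_forall fun y hy => ?_
    rw [uIoc_of_le zero_le_one] at hy
    have hy := Ioc_subset_Icc_self hy
    rw [← le_antisymm (a1 y hy) (b1 y hy), ← le_antisymm (a2 y hy) (b2 y hy)]
    exact (hul y hy).mul (hwl y hy)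

/-- There is a coefficient consistent with the energy of its own positive solution. -/
theorem exists_coefficient (hf : Continuous f) (hf0 : f 0 = 0)
    (hfp : ∀ s : ℝ, 0 < s → 0 < f s) (hmono : Monotone f)
    (hlam : 0 < lam) (hα0 : 0 < α) (hα1 : α < 1)
    (hconc : ∀ τ : ℝ, 0 < τ → τ < 1 → ∀ s : ℝ, 0 < s → τ ^ α * f s ≤ f (τ * s))
    (hf0' : Tendsto (fun s => f s / s) (𝓝[>] (0:ℝ)) atTop)
    (hfi : Tendsto (fun s => f s / s) atTop (𝓝 0)) {a b : ℝ} (ha : 0 < a) (hb : 0 ≤ b) :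
    ∃ m u w, 0 ≤ m ∧ BeamSol lam f m u w ∧ m = a + b * ∫ x in (0:ℝ)..1, u x * w x := by
  obtain ⟨M, hM0, hM⟩ : ∃ M, 0 < M ∧ lam * f M ≤ a * M := by
    have h1 : ∀ᶠ s in atTop, f s / s < a / lam := hfi.eventually_lt_const (by positivity)
    obtain ⟨M, h1, h2⟩ := (h1.and (eventually_gt_atTop 0)).exists
    refine ⟨M, h2, ?_⟩
    rw [div_lt_div_iff₀ h2 hlam] at h1
    linarith
  have hex : ∀ m, ∃ u w, a ≤ m → BeamSol lam f m u w ∧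
      ∀ x ∈ Icc (0:ℝ) 1, u x ≤ M ∧ w x ≤ M := by
    intro m
    by_cases hm : a ≤ m
    · obtain ⟨u, w, h⟩ := exists_beamSol hf hf0 hmono hlam hf0' (ha.le.trans hm) hM0
        (hM.trans (mul_le_mul_of_nonneg_right hm hM0.le))
      exact ⟨u, w, fun _ => h⟩
    · exact ⟨0, 0, fun h => absurd h hm⟩
  choose U W hUW using hex
  set g : ℝ → ℝ := fun m => a + b * ∫ x in (0:ℝ)..1, U m x * W m x with hg
  have g_anti : ∀ m m', a ≤ m → m ≤ m' → g m' ≤ g m := fun m m' hm hmm => by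
    have := (hUW m' (hm.trans hmm)).1.integral_le hfp hmono hlam hα0 hα1 hconc
      (ha.le.trans hm) hmm (hUW m hm).1
    simp only [hg]; gcongr
  have g_ge : ∀ m, a ≤ m → a ≤ g m := fun m hm => by
    have h1 := (hUW m hm).1
    have : 0 ≤ ∫ x in (0:ℝ)..1, U m x * W m x :=
      intervalIntegral.integral_nonneg zero_le_one fun x hx => mul_nonneg (h1.disp_nonneg x hx)
        (h1.moment_nonneg hfp hlam (ha.le.trans hm) x hx)
    have := mul_nonneg hb this
    simp only [hg]; linarith
  set S : Set ℝ := {m | a ≤ m ∧ m ≤ g m} with hS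
  have haS : a ∈ S := ⟨le_rfl, g_ge a le_rfl⟩
  have hbdd : BddAbove S := ⟨g a, fun m hm => hm.2.trans (g_anti a m le_rfl hm.1)⟩
  set s := sSup S
  have has : a ≤ s := le_csSup hbdd haS
  have g_lim : ∀ μ : ℕ → ℝ, (Monotone μ ∨ Antitone μ) → (∀ n, a ≤ μ n) → (∀ n, μ n ≤ s + 1) →
      Tendsto μ atTop (𝓝 s) → Tendsto (fun n => g (μ n)) atTop (𝓝 (g s)) := by
    intro μ h1 h2 h3 h4
    exact ((tendsto_integral hf hf0 hfp hmono hlam hα0 hα1 hconc h1 (fun n => ha.le.trans (h2 n))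
      h3 h4 (fun n => (hUW _ (h2 n)).1) (fun n => (hUW _ (h2 n)).2) (hUW s has).1
      (hUW (s + 1) (by linarith)).1).const_mul b).const_add a
  have h1 : s ≤ g s := by
    obtain ⟨μ, hμ1, hμ2, hμ3⟩ := exists_seq_tendsto_sSup ⟨a, haS⟩ hbdd
    exact le_of_tendsto_of_tendsto' hμ2 (g_lim μ (Or.inl hμ1) (fun n => (hμ3 n).1)
      (fun n => (le_csSup hbdd (hμ3 n)).trans (by linarith)) hμ2) fun n => (hμ3 n).2
  -- coefficients above `s` are not in `S`, so `g` lies below the diagonal there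
  have h2 : g s ≤ s := by
    have l1 : Tendsto (fun n : ℕ => s + 1 / ((n : ℝ) + 1)) atTop (𝓝 s) := by
      simpa using (tendsto_one_div_add_atTop_nhds_zero_nat (𝕜 := ℝ)).const_add s
    have p1 : ∀ n : ℕ, 0 < 1 / ((n : ℝ) + 1) := fun n => by positivity
    have l2 := g_lim (fun n : ℕ => s + 1 / ((n : ℝ) + 1))
      (Or.inr fun i j hij => by
        have : (i : ℝ) ≤ j := by exact_mod_cast hij
        simp only; gcongr)
      (fun n => by linarith [p1 n])
      (fun n => by
        have : 1 / ((n : ℝ) + 1) ≤ 1 := by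
          rw [div_le_one (by positivity)]; linarith [Nat.cast_nonneg (α := ℝ) n]
        linarith) l1
    refine le_of_tendsto_of_tendsto' l2 l1 fun n => ?_
    by_contra! hlt
    have : s + 1 / ((n : ℝ) + 1) ≤ s := le_csSup hbdd ⟨by linarith [p1 n], hlt.le⟩
    linarith [p1 n]
  exact ⟨s, U s, W s, ha.le.trans has, (hUW s has).1, le_antisymm h1 h2⟩

end Coefficient

/-! ### Classical solutions -/

theorem D_succ_hasDerivWithinAt {v : ℝ → ℝ} (hv : ContDiffOn ℝ 4 v (Icc 0 1)) {n : ℕ}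
    (hn : n < 4) {x : ℝ} (hx : x ∈ Icc (0:ℝ) 1) :
    HasDerivWithinAt (D n v) (D (n + 1) v x) (Icc 0 1) x := by
  have h1 := hv.differentiableOn_iteratedDerivWithin (m := n) (by exact_mod_cast hn)
    (uniqueDiffOn_Icc zero_lt_one) x hx
  rw [D, D, iteratedDerivWithin_succ]
  exact h1.hasDerivWithinAt

theorem D_continuousOn {v : ℝ → ℝ} (hv : ContDiffOn ℝ 4 v (Icc 0 1)) {n : ℕ} (hn : n ≤ 4) :
    ContinuousOn (D n v) (Icc 0 1) :=
  hv.continuousOn_iteratedDerivWithin (by exact_mod_cast hn) (uniqueDiffOn_Icc zero_lt_one)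

theorem D_hasDerivAt {v : ℝ → ℝ} (hv : ContDiffOn ℝ 4 v (Icc 0 1)) {n : ℕ}
    (hn : n < 4) {x : ℝ} (hx : x ∈ Ioo (0:ℝ) 1) :
    HasDerivAt (D n v) (D (n + 1) v x) x :=
  (D_succ_hasDerivWithinAt hv hn (Ioo_subset_Icc_self hx)).hasDerivAt (Icc_mem_nhds hx.1 hx.2)

theorem D_zero (v : ℝ → ℝ) : D 0 v = v := iteratedDerivWithin_zero

/-- A classical positive solution of the Kirchhoff problem solves the problem with coefficient
frozen at its own Kirchhoff value. -/
theorem beamSol_of_classical {a b lam : ℝ} {f v : ℝ → ℝ} (hv : ContDiffOn ℝ 4 v (Icc 0 1))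
    (hode : ∀ x ∈ Ioo (0:ℝ) 1, D 4 v x - KCoef a b v * D 2 v x = lam * f (v x)) (hbc : BC v)
    (hpos : ∀ x ∈ Ioo (0:ℝ) 1, 0 < v x) :
    BeamSol lam f (KCoef a b v) v (fun x => -D 2 v x) ∧
      KCoef a b v = a + b * ∫ x in (0:ℝ)..1, v x * (-D 2 v x) := by
  obtain ⟨b0, b1, b2, b3⟩ := hbc
  have d0 : ∀ x ∈ Ioo (0:ℝ) 1, HasDerivAt v (D 1 v x) x := fun x hx => by
    simpa only [D_zero] using D_hasDerivAt hv (n := 0) (by norm_num) hx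
  have d1 : ∀ x ∈ Ioo (0:ℝ) 1, HasDerivAt (D 1 v) (D 2 v x) x := fun x hx =>
    D_hasDerivAt hv (by norm_num) hx
  refine ⟨⟨⟨hv.continuousOn, b0, b1, D 1 v, d0, fun x hx => ?_⟩,
    ⟨(D_continuousOn hv (by norm_num)).neg, by simp [b2], by simp [b3], fun x => -D 3 v x,
      fun x hx => (D_hasDerivAt hv (by norm_num) hx).neg, fun x hx => ?_⟩, hpos⟩, ?_⟩
  · exact (d1 x hx).congr_deriv (by ring)
  · exact (D_hasDerivAt hv (n := 3) (by norm_num) hx).neg.congr_deriv (by linarith [hode x hx])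
  · rw [KCoef, integral_sq_deriv hv.continuousOn (D_continuousOn hv (by norm_num))
      (D_continuousOn hv (n := 2) (by norm_num)).neg b0 b1 d0 fun x hx => by simpa using d1 x hx]
    rfl

theorem contDiff_four_of_chain {g₀ g₁ g₂ g₃ g₄ : ℝ → ℝ} (h0 : ∀ x, HasDerivAt g₀ (g₁ x) x)
    (h1 : ∀ x, HasDerivAt g₁ (g₂ x) x) (h2 : ∀ x, HasDerivAt g₂ (g₃ x) x)
    (h3 : ∀ x, HasDerivAt g₃ (g₄ x) x) (c4 : Continuous g₄) :
    ContDiff ℝ 4 g₀ ∧ ∀ x ∈ Icc (0:ℝ) 1, D 1 g₀ x = g₁ x ∧ D 2 g₀ x = g₂ x ∧ D 4 g₀ x = g₄ x := by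
  have e0 : deriv g₀ = g₁ := funext fun x => (h0 x).deriv
  have e1 : deriv g₁ = g₂ := funext fun x => (h1 x).deriv
  have e2 : deriv g₂ = g₃ := funext fun x => (h2 x).deriv
  have e3 : deriv g₃ = g₄ := funext fun x => (h3 x).deriv
  have i1 : iteratedDeriv 1 g₀ = g₁ := by rw [iteratedDeriv_one, e0]
  have i2 : iteratedDeriv 2 g₀ = g₂ := by rw [iteratedDeriv_succ, i1, e1]
  have i3 : iteratedDeriv 3 g₀ = g₃ := by rw [iteratedDeriv_succ, i2, e2]
  have i4 : iteratedDeriv 4 g₀ = g₄ := by rw [iteratedDeriv_succ, i3, e3]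
  have s1 : ∀ (n : ℕ) (p q : ℝ → ℝ), (∀ x, HasDerivAt p (q x) x) → ContDiff ℝ n q →
      ContDiff ℝ (n + 1 : ℕ) p := fun n p q hpq hq => by
    push_cast
    rw [contDiff_succ_iff_deriv, funext fun x => (hpq x).deriv]
    exact ⟨fun x => (hpq x).differentiableAt, by simp, hq⟩
  have hC : ContDiff ℝ 4 g₀ := by
    exact_mod_cast s1 3 _ _ h0 (s1 2 _ _ h1 (s1 1 _ _ h2 (s1 0 _ _ h3
      (by exact_mod_cast contDiff_zero.2 c4))))
  refine ⟨hC, fun x hx => ?_⟩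
  have hD : ∀ n : ℕ, n ≤ 4 → D n g₀ x = iteratedDeriv n g₀ x := fun n hn =>
    iteratedDerivWithin_eq_iteratedDeriv (uniqueDiffOn_Icc zero_lt_one)
      (hC.contDiffAt.of_le (by exact_mod_cast hn)) hx
  rw [hD 1 (by norm_num), hD 2 (by norm_num), hD 4 le_rfl, i1, i2, i4]
  exact ⟨rfl, rfl, rfl⟩

/-- A solution with consistent coefficient is classical. It agrees on `[0,1]` with a function `v`
that solves an extended equation on the whole line, so regularity up to the endpoints, and the one-sided
derivatives there, are read off from `v`. -/
theorem classical_of_beamSol {a b lam m : ℝ} {f u w : ℝ → ℝ} (hf : Continuous f) (hm : 0 ≤ m)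
    (H : BeamSol lam f m u w) (hmu : m = a + b * ∫ x in (0:ℝ)..1, u x * w x) :
    ∃ v, EqOn v u (Icc 0 1) ∧ ContDiffOn ℝ 4 v (Icc 0 1) ∧
      (∀ x ∈ Ioo (0:ℝ) 1, D 4 v x - KCoef a b v * D 2 v x = lam * f (v x)) ∧ BC v ∧
      ∀ x ∈ Ioo (0:ℝ) 1, 0 < v x := by
  obtain ⟨k, ck, hk⟩ := exists_ext (h := fun x => lam * f (u x))
    (continuousOn_const.mul (hf.comp_continuousOn H.disp.cont))
  obtain ⟨z, z', z0, z1, dz, dz'⟩ := exists_global hm ck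
  have cz : Continuous z := continuous_iff_continuousAt.2 fun x => (dz x).continuousAt
  have hz : IsSol m (fun x => lam * f (u x)) z :=
    IsSol.congr ⟨cz.continuousOn, z0, z1, z', fun x _ => dz x, fun x _ => dz' x⟩
      (fun _ _ => rfl) fun x hx => by rw [hk (Ioo_subset_Icc_self hx)]
  have ezw : EqOn z w (Icc 0 1) := hz.unique hm H.moment
  obtain ⟨v, v', v0, v1, dv, dv'⟩ := exists_global le_rfl cz
  have cv : Continuous v := continuous_iff_continuousAt.2 fun x => (dv x).continuousAt
  have cv' : Continuous v' := continuous_iff_continuousAt.2 fun x => (dv' x).continuousAt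
  have hv : IsSol 0 w v :=
    IsSol.congr ⟨cv.continuousOn, v0, v1, v', fun x _ => dv x, fun x _ => dv' x⟩
      (fun _ _ => rfl) fun x hx => by rw [ezw (Ioo_subset_Icc_self hx)]
  have evu : EqOn v u (Icc 0 1) := hv.unique le_rfl H.disp
  have dv2 : ∀ x, HasDerivAt v' (-z x) x := fun x => (dv' x).congr_deriv (by ring)
  obtain ⟨hC, hD⟩ := contDiff_four_of_chain (g₂ := fun x => -z x) (g₃ := fun x => -z' x) dv dv2
    (fun x => (dz x).neg) (fun x => (dz' x).neg) (by fun_prop)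
  have hK : KCoef a b v = m := by
    have e1 : ∫ t in (0:ℝ)..1, (D 1 v t) ^ 2 = ∫ t in (0:ℝ)..1, v' t ^ 2 := by
      refine integral_congr fun t ht => ?_
      rw [uIcc_of_le zero_le_one] at ht
      simp only [(hD t ht).1]
    have e2 : ∫ t in (0:ℝ)..1, v t * z t = ∫ t in (0:ℝ)..1, u t * w t := by
      refine integral_congr fun t ht => ?_
      rw [uIcc_of_le zero_le_one] at ht
      simp only [evu ht, ezw ht]
    rw [KCoef, e1, integral_sq_deriv cv.continuousOn cv'.continuousOn cz.continuousOn v0 v1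
      (fun x _ => dv x) (fun x _ => dv2 x), e2, ← hmu]
  refine ⟨v, evu, hC.contDiffOn, fun x hx => ?_, ⟨v0, v1, ?_, ?_⟩, fun x hx => ?_⟩
  · have hx' := Ioo_subset_Icc_self hx
    rw [hK, (hD x hx').2.1, (hD x hx').2.2, evu hx', hk hx']
    ring
  · rw [(hD 0 (by simp)).2.1, z0, neg_zero]
  · rw [(hD 1 (by simp)).2.1, z1, neg_zero]
  · rw [evu (Ioo_subset_Icc_self hx)]; exact H.pos x hx

/-- Under (H1), (H2), monotonicity of `f` and the `α`-concavity condition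
`f(τ·s) ≥ τ^α·f(s)`, the Kirchhoff beam problem has exactly one positive solution for each
`λ > 0`. -/
theorem stmt16 (a b : ℝ) (ha : 0 < a) (hb : 0 ≤ b)
    (f : ℝ → ℝ) (hf : Continuous f) (hf0 : f 0 = 0) (hfp : ∀ s : ℝ, 0 < s → 0 < f s)
    (hf0' : Tendsto (fun s => f s / s) (𝓝[>] (0:ℝ)) atTop)
    (hfi : Tendsto (fun s => f s / s) atTop (𝓝 0))
    (hmono : Monotone f)
    (hconc : ∃ α : ℝ, 0 < α ∧ α < 1 ∧
      ∀ τ : ℝ, 0 < τ → τ < 1 → ∀ s : ℝ, 0 < s → τ ^ α * f s ≤ f (τ * s))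
    (lam : ℝ) (hlam : 0 < lam) :
    ∃ u : ℝ → ℝ, (ContDiffOn ℝ 4 u (Set.Icc 0 1) ∧
        (∀ x ∈ Set.Ioo (0:ℝ) 1,
          D 4 u x - KCoef a b u * D 2 u x = lam * f (u x)) ∧ BC u ∧
        (∀ x ∈ Set.Ioo (0:ℝ) 1, 0 < u x)) ∧
      ∀ v : ℝ → ℝ, ContDiffOn ℝ 4 v (Set.Icc 0 1) →
        (∀ x ∈ Set.Ioo (0:ℝ) 1,
          D 4 v x - KCoef a b v * D 2 v x = lam * f (v x)) → BC v →
        (∀ x ∈ Set.Ioo (0:ℝ) 1, 0 < v x) → Set.EqOn v u (Set.Icc 0 1) := by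
  obtain ⟨α, hα0, hα1, hconc⟩ := hconc
  obtain ⟨m, u, w, hm, H, hmu⟩ :=
    exists_coefficient hf hf0 hfp hmono hlam hα0 hα1 hconc hf0' hfi ha hb
  obtain ⟨u₁, hu₁, hsol⟩ := classical_of_beamSol hf hm H hmu
  refine ⟨u₁, hsol, fun v hv hode hbc hpos x hx => ?_⟩
  obtain ⟨H', hmv⟩ := beamSol_of_classical hv hode hbc hpos
  set m' := KCoef a b v
  have hm' : 0 ≤ m' :=
    add_nonneg ha.le (mul_nonneg hb (intervalIntegral.integral_nonneg zero_le_one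
      fun t _ => sq_nonneg _))
  -- a larger coefficient means a smaller energy, hence a smaller coefficient
  have hmm : m = m' := by
    rcases le_total m m' with h | h
    · refine h.antisymm ?_
      have := H'.integral_le hfp hmono hlam hα0 hα1 hconc hm h H
      rw [hmv, hmu]; gcongr
    · refine le_antisymm ?_ h
      have := H.integral_le hfp hmono hlam hα0 hα1 hconc hm' h H'
      rw [hmv, hmu]; gcongr
  rw [hu₁ hx]
  exact le_antisymm ((H'.le hfp hmono hlam hα0 hα1 hconc hm hmm.le H).1 x hx)
    ((H.le hfp hmono hlam hα0 hα1 hconc hm' hmm.ge H').1 x hx)
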